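/- arXiv:1406.2607 — 6 statements merged into one kernel-verified Lean document; each statement's English description precedes it below -/
import Mathlib

section
/- Let T ∈ (0,∞] and let λ : [0,T) → ℝ be a C² function with λ(0) = 0 that satisfies the self-similarity equation. Then λ has exactly one of the following forms: λ(t) = 0 for all t; λ(t) = ct for some c ∈ ℝ∖{0}; λ(t) = c√τ − c√(τ−t) for some c ∈ ℝ∖{0} and some τ > 0 with τ ≥ T; or λ(t) = c√(τ+t) − c√τ for some c ∈ ℝ∖{0} and some τ > 0. -/
/-!
Write `S = [0,T)`, `v = λ'`, `w = λ''` (one-sided at `0`). Differentiating the self-similarity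
equation `r (λ(t + s/r²) - λ(t)) = λ(s)` in `s` once and twice and putting `s = 0` gives
`v(t) = r v(0)` and `w(t) = r³ w(0)`, where `r = r_t > 0` (`scaling_derivatives`).

If `v(0) = 0`, then `v = 0` and `λ = 0`. Otherwise put `κ = w(0)/v(0)`; the function `r = v/v(0)`
is positive and solves `r' = κ r³`, so `(r⁻²)' = -2κ` and `r(t)⁻² = 1 - 2κt`. In particular
`1 - 2κt > 0` on `S`. Integrating `v = v(0)/√(1 - 2κt)` gives `λ(t) = v(0) t` when `κ = 0` and
`λ(t) = (v(0)/κ)(1 - √(1 - 2κt))` otherwise, which is the third or fourth form with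
`τ = 1/(2|κ|)` according to the sign of `κ`.

The four forms exclude each other because, for any `h > 0` with `2h < T`, strict concavity of the
square root shows that they force respectively `λ(h) = 0`; `λ(h) ≠ 0` and `λ(2h) - 2λ(h) = 0`;
`(λ(2h) - 2λ(h)) λ(h) > 0`; and `(λ(2h) - 2λ(h)) λ(h) < 0`.
-/

/-- A driving function `l : [0,T) → ℝ` (with `l 0 = 0`) satisfies the self-similarity
equation if for every `t ∈ [0,T)` there is `r > 0` with
`r * (l (t + s / r²) - l t) = l s` for all `s ∈ [0, r² (T - t))`. -/
def SelfSimilarDriving (T : EReal) (l : ℝ → ℝ) : Prop :=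
  ∀ t : ℝ, 0 ≤ t → (t : EReal) < T →
    ∃ r : ℝ, 0 < r ∧ ∀ s : ℝ, 0 ≤ s → ((t + s / r ^ 2 : ℝ) : EReal) < T →
      r * (l (t + s / r ^ 2) - l t) = l s

/-- The four possible forms of a self-similar driving function on `[0,T)`. -/
def LoewnerForm (T : EReal) (l : ℝ → ℝ) : Fin 4 → Prop
  | 0 => ∀ t : ℝ, 0 ≤ t → (t : EReal) < T → l t = 0
  | 1 => ∃ c : ℝ, c ≠ 0 ∧ ∀ t : ℝ, 0 ≤ t → (t : EReal) < T → l t = c * t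
  | 2 => ∃ c : ℝ, c ≠ 0 ∧ ∃ τ : ℝ, 0 < τ ∧ T ≤ (τ : EReal) ∧
      ∀ t : ℝ, 0 ≤ t → (t : EReal) < T →
        l t = c * Real.sqrt τ - c * Real.sqrt (τ - t)
  | 3 => ∃ c : ℝ, c ≠ 0 ∧ ∃ τ : ℝ, 0 < τ ∧
      ∀ t : ℝ, 0 ≤ t → (t : EReal) < T →
        l t = c * Real.sqrt (τ + t) - c * Real.sqrt τ

open Set Filter Topology

/-- The half-open interval `[0,T)` as a set of reals, where `T` may be infinite. -/
def drivingDomain (T : EReal) : Set ℝ := {t : ℝ | 0 ≤ t ∧ (t : EReal) < T}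

lemma convex_drivingDomain (T : EReal) : Convex ℝ (drivingDomain T) := by
  apply Set.OrdConnected.convex
  refine ⟨fun x hx y hy z hz => ⟨hx.1.trans hz.1, lt_of_le_of_lt ?_ hy.2⟩⟩
  exact_mod_cast hz.2

lemma eventually_coe_lt {T : EReal} {x : ℝ} (hx : (x : EReal) < T) :
    ∀ᶠ y : ℝ in 𝓝 x, (y : EReal) < T :=
  (continuous_coe_real_ereal.tendsto x).eventually (eventually_lt_nhds hx)

lemma drivingDomain_mem_nhdsGE {T : EReal} {x : ℝ} (hx : x ∈ drivingDomain T) :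
    drivingDomain T ∈ 𝓝[≥] x := by
  filter_upwards [self_mem_nhdsWithin, nhdsWithin_le_nhds (eventually_coe_lt hx.2)] with y hy hy'
  exact ⟨hx.1.trans hy, hy'⟩

lemma exists_two_mul_mem {T : EReal} (hT : 0 < T) :
    ∃ h : ℝ, 0 < h ∧ h ∈ drivingDomain T ∧ 2 * h ∈ drivingDomain T := by
  have h0 : ((0 : ℝ) : EReal) < T := by simpa using hT
  obtain ⟨ε, hε, hb⟩ := Metric.eventually_nhds_iff.1 (eventually_coe_lt h0)
  refine ⟨ε / 4, by positivity, ⟨by positivity, hb ?_⟩, ⟨by positivity, hb ?_⟩⟩ <;>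
  · rw [Real.dist_eq, sub_zero, abs_of_pos (by positivity)]
    linarith

lemma uniqueDiffOn_drivingDomain {T : EReal} (hT : 0 < T) :
    UniqueDiffOn ℝ (drivingDomain T) := by
  apply uniqueDiffOn_convex (convex_drivingDomain T)
  obtain ⟨h, hpos, hh, -⟩ := exists_two_mul_mem hT
  refine ⟨h, mem_interior_iff_mem_nhds.2 ?_⟩
  filter_upwards [eventually_gt_nhds hpos, eventually_coe_lt hh.2] with y hy hy'
  exact ⟨hy.le, hy'⟩

lemma eq_of_deriv_zero {T : EReal} {f : ℝ → ℝ}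
    (hf : ∀ x ∈ drivingDomain T, HasDerivWithinAt f 0 (drivingDomain T) x)
    {t : ℝ} (ht : t ∈ drivingDomain T) : f t = f 0 := by
  have h0 : (0 : ℝ) ∈ drivingDomain T :=
    ⟨le_rfl, lt_of_le_of_lt (by exact_mod_cast ht.1) ht.2⟩
  have := (convex_drivingDomain T).norm_image_sub_le_of_norm_hasDerivWithin_le (C := 0)
    hf (fun x _ => by simp) h0 ht
  simpa [sub_eq_zero] using this

lemma eq_of_deriv_eq {T : EReal} {f g v : ℝ → ℝ}
    (hf : ∀ x ∈ drivingDomain T, HasDerivWithinAt f (v x) (drivingDomain T) x)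
    (hg : ∀ x ∈ drivingDomain T, HasDerivWithinAt g (v x) (drivingDomain T) x)
    (h0 : f 0 = g 0) {t : ℝ} (ht : t ∈ drivingDomain T) : f t = g t := by
  have := eq_of_deriv_zero (f := fun x => f x - g x)
    (fun x hx => by simpa using (hf x hx).fun_sub (hg x hx)) ht
  simp only [h0, sub_self] at this
  linarith

/-- Differentiating an identity `a (f(t + s/b) - d) = f(s)` that holds for `s` slightly above `s₀`,
using right derivatives only. -/
lemma right_deriv_scaling {T : EReal} {f f' : ℝ → ℝ}
    (hf : ∀ x ∈ drivingDomain T, HasDerivWithinAt f (f' x) (drivingDomain T) x)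
    {a b d t s₀ : ℝ} (hb : 0 < b) (hs : s₀ ∈ drivingDomain T)
    (hts : t + s₀ / b ∈ drivingDomain T)
    (heq : ∀ s, s₀ ≤ s → s ∈ drivingDomain T → t + s / b ∈ drivingDomain T →
      a * (f (t + s / b) - d) = f s) :
    a * (f' (t + s₀ / b) / b) = f' s₀ := by
  have h1 : HasDerivWithinAt f (f' s₀) (Ici s₀) s₀ :=
    (hf _ hs).mono_of_mem_nhdsWithin (drivingDomain_mem_nhdsGE hs)
  have h2 : HasDerivWithinAt f (f' (t + s₀ / b)) (Ici (t + s₀ / b)) (t + s₀ / b) :=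
    (hf _ hts).mono_of_mem_nhdsWithin (drivingDomain_mem_nhdsGE hts)
  have hin : HasDerivWithinAt (fun s => t + s / b) (1 / b) (Ici s₀) s₀ :=
    ((hasDerivWithinAt_id s₀ _).div_const b).const_add t
  have hmaps : MapsTo (fun s => t + s / b) (Ici s₀) (Ici (t + s₀ / b)) := by
    intro s hs
    simp only [mem_Ici] at hs ⊢
    gcongr
  have h3 : HasDerivWithinAt (fun s => f (t + s / b)) (f' (t + s₀ / b) * (1 / b)) (Ici s₀) s₀ :=
    HasDerivWithinAt.comp s₀ (h₂ := f) h2 hin hmaps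
  have h4 := (h3.sub_const d).const_mul a
  have hev : (fun s => a * (f (t + s / b) - d)) =ᶠ[𝓝[≥] s₀] f := by
    have ht := hin.continuousWithinAt.tendsto_nhdsWithin hmaps (drivingDomain_mem_nhdsGE hts)
    filter_upwards [self_mem_nhdsWithin, drivingDomain_mem_nhdsGE hs, ht] with s h h' h''
    exact heq s h h' h''
  have h5 := h1.congr_of_eventuallyEq hev (heq s₀ le_rfl hs hts)
  have := (uniqueDiffWithinAt_Ici s₀).eq_deriv _ h4 h5
  rw [← this]
  ring

/-- The first two derivatives of the self-similarity equation at `s = 0`. -/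
lemma scaling_derivatives {T : EReal} {l v w : ℝ → ℝ} (hss : SelfSimilarDriving T l)
    (hl : ∀ x ∈ drivingDomain T, HasDerivWithinAt l (v x) (drivingDomain T) x)
    (hv : ∀ x ∈ drivingDomain T, HasDerivWithinAt v (w x) (drivingDomain T) x)
    {t : ℝ} (ht : t ∈ drivingDomain T) :
    ∃ r : ℝ, 0 < r ∧ v t = r * v 0 ∧ w t = r ^ 3 * w 0 := by
  obtain ⟨r, hr, h⟩ := hss t ht.1 ht.2
  have h0 : (0 : ℝ) ∈ drivingDomain T :=
    ⟨le_rfl, lt_of_le_of_lt (by exact_mod_cast ht.1) ht.2⟩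
  have hr2 : 0 < r ^ 2 := by positivity
  have ht0 : t + 0 / r ^ 2 ∈ drivingDomain T := by simpa using ht
  have hfirst : ∀ s, 0 ≤ s → s ∈ drivingDomain T → t + s / r ^ 2 ∈ drivingDomain T →
      r⁻¹ * (v (t + s / r ^ 2) - 0) = v s := by
    intro s _ hs hts
    rw [← right_deriv_scaling (a := r) (d := l t) hl hr2 hs hts
      (fun s' _ hs' hts' => h s' hs'.1 hts'.2)]
    field_simp
    ring
  have e1 := hfirst 0 le_rfl h0 ht0
  have e2 := right_deriv_scaling hv hr2 h0 ht0 hfirst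
  simp only [zero_div, add_zero, sub_zero] at e1 e2
  refine ⟨r, hr, ?_, ?_⟩
  · rw [← e1]
    field_simp
  · rw [← e2]
    field_simp

/-- Integration of `r' = κ r³`, `r(0) = 1`, for positive `r`. -/
lemma inv_sq_eq {T : EReal} {r : ℝ → ℝ} {κ : ℝ} (hr0 : r 0 = 1)
    (hpos : ∀ x ∈ drivingDomain T, 0 < r x)
    (hr : ∀ x ∈ drivingDomain T, HasDerivWithinAt r (κ * r x ^ 3) (drivingDomain T) x)
    {t : ℝ} (ht : t ∈ drivingDomain T) : (r t ^ 2)⁻¹ = 1 - 2 * κ * t := by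
  refine eq_of_deriv_eq (f := fun x => (r x ^ 2)⁻¹) (g := fun x => 1 - 2 * κ * x)
    (v := fun _ => -(2 * κ)) (fun x hx => ?_) (fun x hx => ?_) (by simp [hr0]) ht
  · have hx0 := (hpos x hx).ne'
    refine HasDerivWithinAt.congr_deriv (((hr x hx).fun_pow 2).fun_inv (pow_ne_zero 2 hx0)) ?_
    field_simp
    ring
  · simpa using ((hasDerivWithinAt_id x _).const_mul (2 * κ)).const_sub 1

/-- Strict concavity of the square root at three equally spaced points. -/
lemma sqrt_add_sqrt_lt {x h : ℝ} (hx : 0 ≤ x) (hh : 0 < h) :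
    √(x + 2 * h) + √x < 2 * √(x + h) := by
  have ha := Real.sq_sqrt (show 0 ≤ x + 2 * h by positivity)
  have hb := Real.sq_sqrt (show 0 ≤ x + h by positivity)
  have hd := Real.sq_sqrt hx
  have hlt : √x < √(x + 2 * h) := Real.sqrt_lt_sqrt hx (by linarith)
  have := Real.sqrt_nonneg (x + h)
  apply lt_of_pow_lt_pow_left₀ 2 (by positivity)
  nlinarith [pow_pos (sub_pos.2 hlt) 2]

lemma exists_form {T : EReal} (hT : 0 < T) {l : ℝ → ℝ}
    (hC2 : ContDiffOn ℝ 2 l (drivingDomain T)) (h0 : l 0 = 0)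
    (hss : SelfSimilarDriving T l) : ∃ i : Fin 4, LoewnerForm T l i := by
  have hS := uniqueDiffOn_drivingDomain hT
  obtain ⟨v, hvdef⟩ : ∃ v, v = derivWithin l (drivingDomain T) := ⟨_, rfl⟩
  obtain ⟨w, hwdef⟩ : ∃ w, w = derivWithin v (drivingDomain T) := ⟨_, rfl⟩
  have hl : ∀ x ∈ drivingDomain T, HasDerivWithinAt l (v x) (drivingDomain T) x := fun x hx => by
    rw [hvdef]
    exact (hC2.differentiableOn (by norm_num) x hx).hasDerivWithinAt
  have hvC : ContDiffOn ℝ 1 v (drivingDomain T) := by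
    rw [hvdef]
    exact hC2.derivWithin hS (by norm_num)
  have hv : ∀ x ∈ drivingDomain T, HasDerivWithinAt v (w x) (drivingDomain T) x := fun x hx => by
    rw [hwdef]
    exact (hvC.differentiableOn (by norm_num) x hx).hasDerivWithinAt
  have hscale := fun t (ht : t ∈ drivingDomain T) => scaling_derivatives hss hl hv ht
  by_cases hv0 : v 0 = 0
  · refine ⟨0, fun t ht htT => ?_⟩
    refine (eq_of_deriv_zero (fun x hx => ?_) ⟨ht, htT⟩).trans h0
    obtain ⟨r, -, hr, -⟩ := hscale x hx
    simpa [hr, hv0] using hl x hx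
  obtain ⟨κ, hκ⟩ : ∃ κ, κ = w 0 / v 0 := ⟨_, rfl⟩
  have hpos : ∀ x ∈ drivingDomain T, 0 < v x / v 0 := fun x hx => by
    obtain ⟨r, hr, e, -⟩ := hscale x hx
    rwa [e, mul_div_cancel_right₀ _ hv0]
  have hinv : ∀ t ∈ drivingDomain T, ((v t / v 0) ^ 2)⁻¹ = 1 - 2 * κ * t := fun t ht => by
    refine inv_sq_eq (r := fun x => v x / v 0) (div_self hv0) hpos (fun x hx => ?_) ht
    obtain ⟨r, hr, e, e'⟩ := hscale x hx
    refine HasDerivWithinAt.congr_deriv ((hv x hx).div_const (v 0)) ?_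
    rw [e, e', mul_div_cancel_right₀ _ hv0, hκ]
    ring
  have hlin : ∀ t ∈ drivingDomain T, 0 < 1 - 2 * κ * t := fun t ht => by
    rw [← hinv t ht]
    have := hpos t ht
    positivity
  have hveq : ∀ t ∈ drivingDomain T, v t = v 0 / √(1 - 2 * κ * t) := fun t ht => by
    rw [← hinv t ht, Real.sqrt_inv, Real.sqrt_sq (hpos t ht).le]
    field_simp
  by_cases hκ0 : κ = 0
  · refine ⟨1, v 0, hv0, fun t ht htT => ?_⟩
    refine eq_of_deriv_eq (g := fun x => v 0 * x) hl (fun x hx => ?_) (by simp [h0]) ⟨ht, htT⟩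
    rw [hveq x hx, hκ0]
    simpa using (hasDerivWithinAt_id x (drivingDomain T)).const_mul (v 0)
  have hsol : ∀ t ∈ drivingDomain T, l t = v 0 / κ * (1 - √(1 - 2 * κ * t)) := fun t ht => by
    refine eq_of_deriv_eq (g := fun x => v 0 / κ * (1 - √(1 - 2 * κ * x))) hl (fun x hx => ?_)
      (by simp [h0]) ht
    have hin : HasDerivWithinAt (fun x => 1 - 2 * κ * x) (-(2 * κ)) (drivingDomain T) x := by
      simpa using ((hasDerivWithinAt_id x _).const_mul (2 * κ)).const_sub 1
    refine HasDerivWithinAt.congr_deriv (((hin.sqrt (hlin x hx).ne').const_sub 1).const_mul (v 0 / κ)) ?_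
    rw [hveq x hx]
    have := Real.sqrt_pos.2 (hlin x hx)
    field_simp
  rcases lt_or_gt_of_ne hκ0 with hneg | hposκ
  · obtain ⟨τ, hτ⟩ : ∃ τ, τ = 1 / (2 * -κ) := ⟨_, rfl⟩
    have hκ' : 0 < -κ := by linarith
    have hτpos : 0 < τ := by rw [hτ]; positivity
    have hsτ := Real.sqrt_pos.2 hτpos
    refine ⟨3, -(v 0 / κ) / √τ, by simp [hv0, hκ0, hsτ.ne'], τ, hτpos, fun t ht htT => ?_⟩
    have e : 1 - 2 * κ * t = (τ + t) / τ := by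
      rw [hτ]
      field_simp
      ring
    rw [hsol t ⟨ht, htT⟩, e, Real.sqrt_div' _ hτpos.le]
    field_simp
    ring
  · obtain ⟨τ, hτ⟩ : ∃ τ, τ = 1 / (2 * κ) := ⟨_, rfl⟩
    have hτpos : 0 < τ := by rw [hτ]; positivity
    have hsτ := Real.sqrt_pos.2 hτpos
    refine ⟨2, v 0 / κ / √τ, by simp [hv0, hκ0, hsτ.ne'], τ, hτpos, ?_, fun t ht htT => ?_⟩
    · -- `1 - 2κt` is positive on the domain and vanishes at `τ`.
      by_contra! hlt
      have := hlin τ ⟨hτpos.le, hlt⟩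
      rw [hτ] at this
      field_simp at this
      norm_num at this
    · have e : 1 - 2 * κ * t = (τ - t) / τ := by
        rw [hτ]
        field_simp
      rw [hsol t ⟨ht, htT⟩, e, Real.sqrt_div' _ hτpos.le]
      field_simp

/-- The condition on `λ(h)` and `λ(2h)` by which the four forms are told apart. -/
def formTest (a b : ℝ) : Fin 4 → Prop
  | 0 => a = 0
  | 1 => a ≠ 0 ∧ b - 2 * a = 0
  | 2 => 0 < (b - 2 * a) * a
  | 3 => (b - 2 * a) * a < 0

lemma formTest_unique {a b : ℝ} {i j : Fin 4} (hi : formTest a b i) (hj : formTest a b j) :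
    i = j := by
  fin_cases i <;> fin_cases j <;> simp_all [formTest] <;> linarith

lemma formTest_of_form {T : EReal} {l : ℝ → ℝ} {h : ℝ} (hpos : 0 < h)
    (h1 : h ∈ drivingDomain T) (h2 : 2 * h ∈ drivingDomain T) {i : Fin 4}
    (hi : LoewnerForm T l i) : formTest (l h) (l (2 * h)) i := by
  fin_cases i
  · exact hi h h1.1 h1.2
  · obtain ⟨c, hc, hl⟩ := hi
    change l h ≠ 0 ∧ l (2 * h) - 2 * l h = 0
    rw [hl h h1.1 h1.2, hl _ h2.1 h2.2]
    exact ⟨mul_ne_zero hc hpos.ne', by ring⟩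
  · obtain ⟨c, hc, τ, hτ, hTτ, hl⟩ := hi
    change 0 < (l (2 * h) - 2 * l h) * l h
    rw [hl h h1.1 h1.2, hl _ h2.1 h2.2]
    have hle : 2 * h < τ := by exact_mod_cast h2.2.trans_le hTτ
    have key := sqrt_add_sqrt_lt (x := τ - 2 * h) (by linarith) hpos
    have hlt : √(τ - h) < √τ := Real.sqrt_lt_sqrt (by linarith) (by linarith)
    rw [show τ - 2 * h + 2 * h = τ by ring, show τ - 2 * h + h = τ - h by ring] at key
    have : 0 < c ^ 2 * ((2 * √(τ - h) - (√τ + √(τ - 2 * h))) * (√τ - √(τ - h))) :=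
      mul_pos (by positivity) (mul_pos (sub_pos.2 key) (sub_pos.2 hlt))
    linarith
  · obtain ⟨c, hc, τ, hτ, hl⟩ := hi
    change (l (2 * h) - 2 * l h) * l h < 0
    rw [hl h h1.1 h1.2, hl _ h2.1 h2.2]
    have key := sqrt_add_sqrt_lt hτ.le hpos
    have hlt : √τ < √(τ + h) := Real.sqrt_lt_sqrt hτ.le (by linarith)
    have : 0 < c ^ 2 * ((2 * √(τ + h) - (√(τ + 2 * h) + √τ)) * (√(τ + h) - √τ)) :=
      mul_pos (by positivity) (mul_pos (sub_pos.2 key) (sub_pos.2 hlt))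
    linarith


/-- Theorem 3.2 (classification): a `C²` driving function on `[0,T)` with `λ(0) = 0`
satisfying the self-similarity equation has exactly one of the four forms
`0`, `c t`, `c √τ - c √(τ - t)` (with `τ ≥ T`), or `c √(τ + t) - c √τ`. -/
theorem selfSimilar_driving_classification
    (T : EReal) (hT : 0 < T) (l : ℝ → ℝ)
    (hC2 : ContDiffOn ℝ 2 l {t : ℝ | 0 ≤ t ∧ (t : EReal) < T})
    (h0 : l 0 = 0)
    (hss : SelfSimilarDriving T l) :
    ∃! i : Fin 4, LoewnerForm T l i := by
  obtain ⟨i, hi⟩ := exists_form hT hC2 h0 hss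
  obtain ⟨h, hpos, h1, h2⟩ := exists_two_mul_mem hT
  exact ⟨i, hi, fun j hj =>
    formTest_unique (formTest_of_form hpos h1 h2 hj) (formTest_of_form hpos h1 h2 hi)⟩
end

section
/- Let T ∈ (0,∞), A > 0, and let λ : [0,T) → ℝ be a C² function with λ(0) = 0, λ′(0) ≠ 0, such that λ″(t) ≠ 0 and λ′(t)³ = A·λ″(t) for all t ∈ [0,T). Then there exist c ∈ ℝ∖{0} with c² = 2A and τ ≥ T such that λ(t) = c√τ − c√(τ−t) for all t ∈ [0,T); moreover τ = A/(2·λ′(0)²) and c has the same sign as λ′(0). -/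
/-!
Write `p = λ'`. Since `λ'' ≠ 0`, the equation `p³ = A λ''` forces `p ≠ 0` on `[0,T)`, so `p` keeps
the sign of `p 0`. The equation has two first integrals: `1/p² + 2t/A`, which gives
`p² (τ - t) = A/2` with `τ = A / (2 p(0)²)`, and `λ + A/p`, which gives `λ = A/p(0) - A/p`.
The first forces `t < τ` for every `t < T`, and with the sign of `p` it shows
`A/p = c √(τ - t)` for `c = A / (p(0) √τ)`; no further integration is needed.
-/

theorem eq_zero_value_of_hasDerivWithinAt_zero {T : ℝ} (hT : 0 < T) {f : ℝ → ℝ}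
    (hf : ∀ t ∈ Set.Ico (0 : ℝ) T, HasDerivWithinAt f 0 (Set.Ico 0 T) t) :
    ∀ t ∈ Set.Ico (0 : ℝ) T, f t = f 0 := by
  intro t ht
  have h := (convex_Ico (0 : ℝ) T).norm_image_sub_le_of_norm_hasDerivWithin_le
    (C := 0) hf (by simp) (Set.left_mem_Ico.2 hT) ht
  rw [zero_mul] at h
  exact sub_eq_zero.1 (norm_le_zero_iff.1 h)

/-- Solution of the constant positive Loewner curvature ODE `λ'³ = A λ''` (`A > 0`),
from the proof of Theorem 3.2: on `[0,T)` such a `λ` (with `λ(0) = 0`, `λ'(0) ≠ 0`)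
must equal `c √τ - c √(τ - t)` with `c² = 2A`, `τ = A/(2 λ'(0)²) ≥ T`, and
`c` of the same sign as `λ'(0)`. -/
theorem constant_positive_curvature_ode
    (T A : ℝ) (hT : 0 < T) (hA : 0 < A) (l : ℝ → ℝ)
    (hC2 : ContDiffOn ℝ 2 l (Set.Ico 0 T))
    (h0 : l 0 = 0)
    (h'0 : derivWithin l (Set.Ico 0 T) 0 ≠ 0)
    (hode : ∀ t ∈ Set.Ico (0 : ℝ) T,
      derivWithin (derivWithin l (Set.Ico 0 T)) (Set.Ico 0 T) t ≠ 0 ∧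
      (derivWithin l (Set.Ico 0 T) t) ^ 3
        = A * derivWithin (derivWithin l (Set.Ico 0 T)) (Set.Ico 0 T) t) :
    ∃ c τ : ℝ, c ≠ 0 ∧ c ^ 2 = 2 * A ∧ 0 < τ ∧ T ≤ τ ∧
      τ = A / (2 * (derivWithin l (Set.Ico 0 T) 0) ^ 2) ∧
      (0 < c ↔ 0 < derivWithin l (Set.Ico 0 T) 0) ∧
      ∀ t ∈ Set.Ico (0 : ℝ) T, l t = c * Real.sqrt τ - c * Real.sqrt (τ - t) := by
  have hS : UniqueDiffOn ℝ (Set.Ico (0 : ℝ) T) := uniqueDiffOn_Ico 0 T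
  have hl : ∀ t ∈ Set.Ico (0 : ℝ) T,
      HasDerivWithinAt l (derivWithin l (Set.Ico 0 T) t) (Set.Ico 0 T) t := fun t ht =>
    (hC2.differentiableOn (by norm_num) t ht).hasDerivWithinAt
  have hp1 : ContDiffOn ℝ 1 (derivWithin l (Set.Ico 0 T)) (Set.Ico 0 T) :=
    hC2.derivWithin hS (by norm_num)
  have hp : ∀ t ∈ Set.Ico (0 : ℝ) T, HasDerivWithinAt (derivWithin l (Set.Ico 0 T))
      (derivWithin (derivWithin l (Set.Ico 0 T)) (Set.Ico 0 T) t) (Set.Ico 0 T) t := fun t ht =>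
    (hp1.differentiableOn (by norm_num) t ht).hasDerivWithinAt
  have hcont := hp1.continuousOn
  generalize derivWithin l (Set.Ico 0 T) = p at *
  generalize derivWithin p (Set.Ico 0 T) = q at *
  have h0mem : (0 : ℝ) ∈ Set.Ico 0 T := Set.left_mem_Ico.2 hT
  have hpne : ∀ t ∈ Set.Ico (0 : ℝ) T, p t ≠ 0 := by
    intro t ht h
    have h1 := (hode t ht).2
    rw [h] at h1
    have h2 : A * q t = 0 := by rw [← h1]; norm_num
    exact (mul_ne_zero hA.ne' (hode t ht).1) h2
  have hq : ∀ t ∈ Set.Ico (0 : ℝ) T, q t = p t ^ 3 / A := fun t ht => by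
    rw [(hode t ht).2, mul_div_cancel_left₀ _ hA.ne']
  have hint1 : ∀ t ∈ Set.Ico (0 : ℝ) T, (p t ^ 2)⁻¹ + 2 / A * t = (p 0 ^ 2)⁻¹ := by
    intro t ht
    have h := eq_zero_value_of_hasDerivWithinAt_zero hT
      (f := fun t => (p t ^ 2)⁻¹ + 2 / A * t) (fun s hs => by
        have hne := hpne s hs
        have hd := (((hp s hs).fun_pow 2).fun_inv (pow_ne_zero 2 hne)).fun_add
          ((hasDerivWithinAt_id s (Set.Ico 0 T)).const_mul (2 / A))
        refine hd.congr_deriv ?_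
        rw [hq s hs]
        field_simp
        norm_num
        ring) t ht
    simpa using h
  have hint2 : ∀ t ∈ Set.Ico (0 : ℝ) T, l t + A * (p t)⁻¹ = A * (p 0)⁻¹ := by
    intro t ht
    have h := eq_zero_value_of_hasDerivWithinAt_zero hT
      (f := fun t => l t + A * (p t)⁻¹) (fun s hs => by
        have hne := hpne s hs
        have hd := (hl s hs).fun_add (((hp s hs).fun_inv hne).const_mul A)
        refine hd.congr_deriv ?_
        rw [hq s hs]
        field_simp
        ring) t ht
    simpa [h0] using h
  have hsign : ∀ t ∈ Set.Ico (0 : ℝ) T, 0 < p 0 * p t := by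
    intro t ht
    by_contra hcon
    push Not at hcon
    -- A nonpositive value of `p 0 * p` would give a zero of `p` by the intermediate value theorem.
    obtain ⟨s, hs, hs0⟩ := isPreconnected_Ico.intermediate_value ht h0mem
      (f := fun t => p 0 * p t) (continuousOn_const.mul hcont)
      (show (0 : ℝ) ∈ Set.Icc _ _ from ⟨hcon, mul_self_nonneg _⟩)
    exact mul_ne_zero h'0 (hpne s hs) hs0
  obtain ⟨τ, hτ⟩ : ∃ τ, τ = A / (2 * p 0 ^ 2) := ⟨_, rfl⟩
  have hτpos : 0 < τ := by rw [hτ]; positivity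
  have hsq : ∀ t ∈ Set.Ico (0 : ℝ) T, 2 * (p t ^ 2 * (τ - t)) = A := by
    intro t ht
    have h := hint1 t ht
    have hne := hpne t ht
    have h1 : τ - t = A / 2 * (p t ^ 2)⁻¹ := by
      have h2 : τ = A / 2 * (p 0 ^ 2)⁻¹ := by rw [hτ]; field_simp
      rw [h2, ← h]
      field_simp
      ring
    rw [h1]
    field_simp
  have hlt : ∀ t ∈ Set.Ico (0 : ℝ) T, 0 < τ - t := fun t ht => by
    have h1 : 0 < p t ^ 2 * (τ - t) := by linarith [hsq t ht]
    exact pos_of_mul_pos_right h1 (sq_nonneg _)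
  have hr : 0 < √τ := Real.sqrt_pos.2 hτpos
  have hr2 : √τ ^ 2 = τ := Real.sq_sqrt hτpos.le
  have hc2 : (A / (p 0 * √τ)) ^ 2 = 2 * A := by
    rw [div_pow, mul_pow, hr2, hτ]
    field_simp
  have hcp : ∀ t ∈ Set.Ico (0 : ℝ) T, 0 < A / (p 0 * √τ) * p t := fun t ht => by
    have h : A / (p 0 * √τ) * p t = A * (p 0 * p t) / (p 0 ^ 2 * √τ) := by field_simp
    rw [h]
    have := hsign t ht
    positivity
  have hcs : ∀ t ∈ Set.Ico (0 : ℝ) T, A * (p t)⁻¹ = A / (p 0 * √τ) * √(τ - t) := by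
    intro t ht
    have hne := hpne t ht
    have h : A = A / (p 0 * √τ) * p t * √(τ - t) := by
      have hpos := hcp t ht
      rw [← sq_eq_sq₀ hA.le (by positivity), mul_pow, mul_pow, hc2, Real.sq_sqrt (hlt t ht).le]
      linear_combination (-A) * hsq t ht
    rw [← div_eq_mul_inv, div_eq_iff hne]
    linear_combination h
  refine ⟨A / (p 0 * √τ), τ, by positivity, hc2, hτpos, ?_, hτ, ?_, ?_⟩
  · exact le_of_forall_lt_imp_le_of_dense fun t ht => by
      rcases le_or_gt 0 t with h | h
      · linarith [hlt t ⟨h, ht⟩]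
      · linarith
  · have h := hcp 0 h0mem
    exact ⟨fun hc => (pos_iff_pos_of_mul_pos h).1 hc, fun hc => (pos_iff_pos_of_mul_pos h).2 hc⟩
  · intro t ht
    have h1 := hcs 0 h0mem
    rw [sub_zero] at h1
    linarith [hint2 t ht, hcs t ht]
end

section
/- Let A > 0, 0 < T < ∞, and let λ : [0,T] → ℝ be continuous on [0,T] and C² on (0,T). Assume that for every t ∈ (0,T) one has λ′(t) ≠ 0, λ″(t) ≠ 0, and 0 < λ′(t)³/λ″(t) ≤ A. Then λ is Hölder continuous with exponent 1/2 and constant √(2A): for all s, t ∈ [0,T], |λ(t) − λ(s)| ≤ √(2A)·√|t − s|. -/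
/-!
Write `u = λ'`. The curvature bound says `u' / u³ ≥ 1 / A`, that is `(1 / u²)' ≤ -2 / A`, so
`x ↦ 1 / u(x)² + 2 x / A` is decreasing on `(0, T)`. Comparing `x` with points `b ↑ t` and dropping
`1 / u(b)² > 0` gives `1 / u(x)² ≥ 2 (t - x) / A`, hence `|u(x)| ≤ A / √(2A (t - x))` for `x < t`.
The right-hand side is minus the derivative of `x ↦ √(2A (t - x))`, so both
`± λ(x) + √(2A (t - x))` are decreasing on `[0, t]`; comparing the values at `s` and `t` gives the
Hölder bound.
-/

/-- The integrated curvature inequality, `λ'(x)² ≤ A / (2 (t - x))`, written without division. -/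
lemma deriv_sq_bound_of_curvature
    (A T : ℝ) (hA : 0 < A) (l : ℝ → ℝ)
    (hC2 : ContDiffOn ℝ 2 l (Set.Ioo 0 T))
    (hcurv : ∀ t ∈ Set.Ioo (0 : ℝ) T,
      deriv l t ≠ 0 ∧ deriv (deriv l) t ≠ 0 ∧
      0 < (deriv l t) ^ 3 / deriv (deriv l) t ∧
      (deriv l t) ^ 3 / deriv (deriv l) t ≤ A)
    {x t : ℝ} (hx : 0 < x) (hxt : x < t) (ht : t ≤ T) :
    2 * (t - x) * (deriv l x) ^ 2 ≤ A := by
  have hd : ∀ y ∈ Set.Ioo (0 : ℝ) T, HasDerivAt (deriv l) (deriv (deriv l) y) y := by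
    intro y hy
    have h1 : ContDiffOn ℝ 1 (deriv l) (Set.Ioo 0 T) :=
      hC2.deriv_of_isOpen isOpen_Ioo (by norm_num)
    exact ((h1.differentiableOn (by norm_num)).differentiableAt
      (isOpen_Ioo.mem_nhds hy)).hasDerivAt
  have hg : ∀ y ∈ Set.Ioo (0 : ℝ) T,
      HasDerivAt (fun z => ((deriv l z) ^ 2)⁻¹ + 2 / A * z)
        (-(2 * deriv l y * deriv (deriv l) y) / ((deriv l y) ^ 2) ^ 2 + 2 / A) y := by
    intro y hy
    have hne : (deriv l y) ^ 2 ≠ 0 := pow_ne_zero 2 (hcurv y hy).1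
    have := (((hd y hy).pow 2).inv hne).add ((hasDerivAt_id y).const_mul (2 / A))
    refine this.congr_deriv ?_
    simp
  have hanti : AntitoneOn (fun z => ((deriv l z) ^ 2)⁻¹ + 2 / A * z) (Set.Ioo 0 T) := by
    refine antitoneOn_of_deriv_nonpos (convex_Ioo 0 T)
      (fun y hy => (hg y hy).continuousAt.continuousWithinAt)
      (fun y hy => (hg y (interior_subset hy)).differentiableAt.differentiableWithinAt) ?_
    intro y hy
    have hy' := interior_subset hy
    rw [(hg y hy').deriv]
    obtain ⟨h1, h2, h3, h4⟩ := hcurv y hy'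
    have h5 : A⁻¹ ≤ ((deriv l y) ^ 3 / deriv (deriv l) y)⁻¹ := inv_anti₀ h3 h4
    have h6 : -(2 * deriv l y * deriv (deriv l) y) / ((deriv l y) ^ 2) ^ 2 + 2 / A
        = 2 * (A⁻¹ - ((deriv l y) ^ 3 / deriv (deriv l) y)⁻¹) := by
      field_simp
      ring
    rw [h6]
    linarith
  have hxT : x ∈ Set.Ioo (0 : ℝ) T := ⟨hx, hxt.trans_le ht⟩
  have hu : 0 < (deriv l x) ^ 2 := by
    have := (hcurv x hxT).1
    positivity
  -- `t = T` is allowed, so `t` is approached by interior points `b < t`.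
  have key : t ≤ x + A / (2 * (deriv l x) ^ 2) := by
    refine le_of_forall_lt_imp_le_of_dense fun b hb => ?_
    rcases le_or_gt b x with hbx | hbx
    · have : 0 ≤ A / (2 * (deriv l x) ^ 2) := by positivity
      linarith
    · have hm := hanti hxT ⟨hx.trans hbx, hb.trans_le ht⟩ hbx.le
      have hp : 0 ≤ ((deriv l b) ^ 2)⁻¹ := by positivity
      have h7 : 2 / A * (b - x) ≤ ((deriv l x) ^ 2)⁻¹ := by
        simp only at hm
        linarith
      have h8 := mul_le_mul_of_nonneg_left h7 (by positivity : 0 ≤ A / 2)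
      have h9 : A / 2 * (2 / A * (b - x)) = b - x := by field_simp
      have h10 : A / 2 * ((deriv l x) ^ 2)⁻¹ = A / (2 * (deriv l x) ^ 2) := by field_simp
      linarith
  have h11 : t - x ≤ A / (2 * (deriv l x) ^ 2) := by linarith
  rw [le_div_iff₀ (by positivity)] at h11
  linarith

/-- One-sided comparison: `m` (to be `λ` or `-λ`) cannot increase by more than `√(2A (t - s))`. -/
lemma sub_le_sqrt_of_deriv_sq_bound
    (A : ℝ) (hA : 0 < A) (m : ℝ → ℝ) {s t : ℝ} (hst : s ≤ t)
    (hcont : ContinuousOn m (Set.Icc s t))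
    (hdiff : DifferentiableOn ℝ m (Set.Ioo s t))
    (hb : ∀ x ∈ Set.Ioo s t, 2 * (t - x) * (deriv m x) ^ 2 ≤ A) :
    m t - m s ≤ √(2 * A * (t - s)) := by
  have hg : ∀ x ∈ Set.Ioo s t, HasDerivAt (fun z => m z + √(2 * A * (t - z)))
      (deriv m x + (-(2 * A)) / (2 * √(2 * A * (t - x)))) x := by
    intro x hx
    have hpos : 0 < 2 * A * (t - x) := mul_pos (by positivity) (sub_pos.2 hx.2)
    have h1 : HasDerivAt (fun z => 2 * A * (t - z)) (-(2 * A)) x := by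
      refine (((hasDerivAt_id x).const_sub t).const_mul (2 * A)).congr_deriv ?_
      simp
    exact ((hdiff.differentiableAt (isOpen_Ioo.mem_nhds hx)).hasDerivAt).add (h1.sqrt hpos.ne')
  have hanti : AntitoneOn (fun z => m z + √(2 * A * (t - z))) (Set.Icc s t) := by
    refine antitoneOn_of_deriv_nonpos (convex_Icc s t)
      (hcont.add (Continuous.continuousOn (by fun_prop))) ?_ ?_
    · rw [interior_Icc]
      exact fun x hx => (hg x hx).differentiableAt.differentiableWithinAt
    · rw [interior_Icc]
      intro x hx
      rw [(hg x hx).deriv]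
      have hpos : 0 < 2 * A * (t - x) := mul_pos (by positivity) (sub_pos.2 hx.2)
      have hr : 0 < √(2 * A * (t - x)) := Real.sqrt_pos.2 hpos
      have hle : deriv m x * √(2 * A * (t - x)) ≤ A := by
        refine abs_le_of_sq_le_sq' ?_ hA.le |>.2
        rw [mul_pow, Real.sq_sqrt hpos.le]
        nlinarith [mul_le_mul_of_nonneg_left (hb x hx) hA.le]
      have h2 : deriv m x ≤ A / √(2 * A * (t - x)) := (le_div_iff₀ hr).2 hle
      have h3 : (-(2 * A)) / (2 * √(2 * A * (t - x))) = -(A / √(2 * A * (t - x))) := by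
        field_simp
      linarith
  have := hanti (Set.left_mem_Icc.2 hst) (Set.right_mem_Icc.2 hst) hst
  simp only [sub_self, mul_zero, Real.sqrt_zero, add_zero] at this
  linarith

/-- Lemma 4.4: if `λ` is continuous on `[0,T]`, `C²` on `(0,T)`, and its Loewner
curvature `λ'(t)³/λ''(t)` satisfies `0 < λ'(t)³/λ''(t) ≤ A` on `(0,T)`, then `λ` is
Hölder-1/2 with constant `√(2A)`: `|λ(t) - λ(s)| ≤ √(2A) √|t - s|` on `[0,T]`. -/
theorem curvature_bound_implies_holder
    (A T : ℝ) (hA : 0 < A) (hT : 0 < T) (l : ℝ → ℝ)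
    (hcont : ContinuousOn l (Set.Icc 0 T))
    (hC2 : ContDiffOn ℝ 2 l (Set.Ioo 0 T))
    (hcurv : ∀ t ∈ Set.Ioo (0 : ℝ) T,
      deriv l t ≠ 0 ∧ deriv (deriv l) t ≠ 0 ∧
      0 < (deriv l t) ^ 3 / deriv (deriv l) t ∧
      (deriv l t) ^ 3 / deriv (deriv l) t ≤ A) :
    ∀ s ∈ Set.Icc (0 : ℝ) T, ∀ t ∈ Set.Icc (0 : ℝ) T,
      |l t - l s| ≤ Real.sqrt (2 * A) * Real.sqrt |t - s| := by
  have main : ∀ s ∈ Set.Icc (0 : ℝ) T, ∀ t ∈ Set.Icc (0 : ℝ) T, s ≤ t →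
      |l t - l s| ≤ Real.sqrt (2 * A) * Real.sqrt |t - s| := by
    intro s hs t ht hst
    have hsub : Set.Ioo s t ⊆ Set.Ioo 0 T := Set.Ioo_subset_Ioo hs.1 ht.2
    have hc : ContinuousOn l (Set.Icc s t) := hcont.mono (Set.Icc_subset_Icc hs.1 ht.2)
    have hd : DifferentiableOn ℝ l (Set.Ioo s t) :=
      (hC2.differentiableOn (by norm_num)).mono hsub
    have hb : ∀ x ∈ Set.Ioo s t, 2 * (t - x) * (deriv l x) ^ 2 ≤ A := fun x hx =>
      deriv_sq_bound_of_curvature A T hA l hC2 hcurv (hsub hx).1 hx.2 ht.2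
    have h1 := sub_le_sqrt_of_deriv_sq_bound A hA l hst hc hd hb
    have h2 := sub_le_sqrt_of_deriv_sq_bound A hA (-l) hst hc.neg hd.neg
      (fun x hx => by simpa [deriv.neg] using hb x hx)
    simp only [Pi.neg_apply] at h2
    rw [abs_of_nonneg (sub_nonneg.2 hst), ← Real.sqrt_mul (by positivity), abs_le]
    constructor <;> linarith
  intro s hs t ht
  rcases le_total s t with hst | hst
  · exact main s hs t ht hst
  · rw [abs_sub_comm (l t), abs_sub_comm t]
    exact main t ht s hs hst
end

section
/- Let A > 0 and 0 < T < ∞. If σ : (0,T) → ℝ is differentiable with σ(t) > 0 and σ(t)³ ≤ A·σ′(t) for all t ∈ (0,T), then σ(t) ≤ √(A/2)·(T − t)^(−1/2) for all t ∈ (0,T). -/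
/-!
The inequality `σ³ ≤ A σ'` says that `(A σ⁻²)' = -2 A σ' σ⁻³ ≤ -2`, so `A σ⁻² + 2 t` is antitone
on `(0, T)`. Comparing its values at `t < s` gives `2 (s - t) ≤ A σ(t)⁻²`, the term `A σ(s)⁻²`
being nonnegative. Letting `s → T` yields `2 (T - t) σ(t)² ≤ A`, which is the claim.
-/

/-- The comparison estimate from the proof of Lemma 4.4: a positive differentiable
solution of the differential inequality `σ³ ≤ A σ'` on `(0,T)` stays below the exact
blow-up solution `σ_{A,T}(t) = √(A/2) (T - t)^{-1/2}`. -/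
theorem sigma_comparison
    (A T : ℝ) (hA : 0 < A) (hT : 0 < T) (σ : ℝ → ℝ)
    (hdiff : ∀ t ∈ Set.Ioo (0 : ℝ) T, DifferentiableAt ℝ σ t)
    (hpos : ∀ t ∈ Set.Ioo (0 : ℝ) T, 0 < σ t)
    (hineq : ∀ t ∈ Set.Ioo (0 : ℝ) T, σ t ^ 3 ≤ A * deriv σ t) :
    ∀ t ∈ Set.Ioo (0 : ℝ) T, σ t ≤ Real.sqrt (A / 2) / Real.sqrt (T - t) := by
  have hder : ∀ t ∈ Set.Ioo (0 : ℝ) T,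
      HasDerivAt (fun x => A / σ x ^ 2 + 2 * x)
        (-(A * (2 * σ t * deriv σ t)) / (σ t ^ 2) ^ 2 + 2) t := by
    intro t ht
    have h1 := (hdiff t ht).hasDerivAt
    have hp := hpos t ht
    have h2 := ((hasDerivAt_const t A).div (h1.pow 2) (pow_pos hp 2).ne').add
      ((hasDerivAt_id t).const_mul 2)
    refine HasDerivAt.congr_deriv (f := fun x => A / σ x ^ 2 + 2 * x) h2 ?_
    simp
  have hanti : AntitoneOn (fun x => A / σ x ^ 2 + 2 * x) (Set.Ioo 0 T) := by
    refine antitoneOn_of_deriv_nonpos (convex_Ioo 0 T)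
      (fun t ht => (hder t ht).continuousAt.continuousWithinAt) ?_ ?_
    · rw [interior_Ioo]
      exact fun t ht => (hder t ht).differentiableAt.differentiableWithinAt
    · rw [interior_Ioo]
      intro t ht
      have hp := hpos t ht
      rw [(hder t ht).deriv, neg_div, neg_add_nonpos_iff, le_div_iff₀ (by positivity)]
      nlinarith [mul_le_mul_of_nonneg_left (hineq t ht) hp.le]
  intro t ht
  have hp := hpos t ht
  have hTt : 0 < T - t := sub_pos.2 ht.2
  have hT' : T ≤ t + A / σ t ^ 2 / 2 := by
    refine le_of_forall_lt_imp_le_of_dense fun s hs => ?_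
    rcases le_or_gt s t with hst | hst
    · have : 0 ≤ A / σ t ^ 2 / 2 := by positivity
      linarith
    · have hs' : s ∈ Set.Ioo 0 T := ⟨ht.1.trans hst, hs⟩
      have h : A / σ s ^ 2 + 2 * s ≤ A / σ t ^ 2 + 2 * t := hanti ht hs' hst.le
      have : 0 ≤ A / σ s ^ 2 := by positivity
      linarith
  have hkey : 2 * (T - t) ≤ A / σ t ^ 2 := by linarith
  rw [le_div_iff₀ (pow_pos hp 2)] at hkey
  rw [← Real.sqrt_div (by positivity)]
  apply Real.le_sqrt_of_sq_le
  rw [le_div_iff₀ hTt]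
  linarith
end

section
/- Let T ∈ (0,∞], λ ∈ C²((0,T)), and t₀ ∈ (0,T) with λ′(t₀)·λ″(t₀) > 0. Assume that for every t ∈ [t₀,T), if λ′(t)·λ″(t) > 0 then |λ′(t)|³ ≤ 8·|λ″(t)|. Then for every t ∈ [t₀,T) one has λ′(t)·λ″(t) > 0 and |λ′(t)| ≥ |λ′(t₀)| > 0; in particular λ′ and λ″ never vanish on [t₀,T). -/
/-!
Write `f = λ'` and `p = λ' λ''`, so that `(f²)' = 2p`. As long as `p > 0`, the function `f²` is
nondecreasing (`sq_le_sq_of_mul_deriv_pos`), and the curvature bound multiplied by `|f|` gives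
`p = |f| |f'| ≥ f⁴ / 8 ≥ f(t₀)⁴ / 8`. Thus `p` is bounded away from `0` for as long as it is
positive, and by continuity it cannot reach `0` (`mul_deriv_pos_of_curvature_bound`): just before
the first point with `p ≤ 0`, it would take the forbidden value `f(t₀)⁴ / 16`.
-/

lemma sq_le_sq_of_mul_deriv_pos {f g : ℝ → ℝ} {a x : ℝ} (hax : a ≤ x)
    (hf : ∀ t ∈ Set.Icc a x, HasDerivAt f (g t) t)
    (hp : ∀ t ∈ Set.Icc a x, 0 < f t * g t) : f a ^ 2 ≤ f x ^ 2 := by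
  have hd : ∀ t ∈ Set.Icc a x, HasDerivAt (fun s => f s ^ 2) (2 * (f t * g t)) t := by
    intro t ht
    have h := (hf t ht).fun_pow 2
    have e : 2 * (f t * g t) = ((2 : ℕ) : ℝ) * f t ^ (2 - 1) * g t := by norm_num; ring
    rw [e]
    exact h
  have hm : MonotoneOn (fun s => f s ^ 2) (Set.Icc a x) := by
    refine monotoneOn_of_deriv_nonneg (convex_Icc a x)
      (fun t ht => (hd t ht).continuousAt.continuousWithinAt)
      (fun t ht => (hd t (interior_subset ht)).differentiableAt.differentiableWithinAt) ?_
    intro t ht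
    rw [(hd t (interior_subset ht)).deriv]
    linarith [hp t (interior_subset ht)]
  exact hm ⟨le_rfl, hax⟩ ⟨hax, le_rfl⟩ hax

/-- On a compact interval, the curvature bound makes positivity of `f f'` at the left endpoint
propagate to the whole interval. -/
lemma mul_deriv_pos_of_curvature_bound {f g : ℝ → ℝ} {a b : ℝ}
    (hf : ∀ t ∈ Set.Icc a b, HasDerivAt f (g t) t)
    (hg : ContinuousOn g (Set.Icc a b)) (ha : 0 < f a * g a)
    (hbound : ∀ t ∈ Set.Icc a b, 0 < f t * g t → |f t| ^ 3 ≤ 8 * |g t|) :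
    ∀ t ∈ Set.Icc a b, 0 < f t * g t := by
  have hpc : ContinuousOn (fun t => f t * g t) (Set.Icc a b) :=
    ContinuousOn.mul (fun t ht => (hf t ht).continuousAt.continuousWithinAt) hg
  have hlower : ∀ t ∈ Set.Icc a b, 0 < f t * g t → (f t ^ 2) ^ 2 ≤ 8 * (f t * g t) := by
    intro t ht hpt
    have h := mul_le_mul_of_nonneg_left (hbound t ht hpt) (abs_nonneg (f t))
    have h1 : |f t| * |g t| = f t * g t := by rw [← abs_mul, abs_of_pos hpt]
    have h2 : (f t ^ 2) ^ 2 = |f t| * |f t| ^ 3 := by rw [← sq_abs (f t)]; ring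
    rw [h2, ← h1]
    linarith
  have hA : 0 < (f a ^ 2) ^ 2 := by
    have : f a ≠ 0 := left_ne_zero_of_mul ha.ne'
    positivity
  by_contra! hcon
  obtain ⟨t, ht, hpt⟩ := hcon
  have hK : IsCompact (Set.Icc a b ∩ (fun t => f t * g t) ⁻¹' Set.Iic 0) :=
    isCompact_Icc.of_isClosed_subset
      (hpc.preimage_isClosed_of_isClosed isClosed_Icc isClosed_Iic) Set.inter_subset_left
  obtain ⟨s, ⟨hs, hps⟩, hmin⟩ := hK.exists_isLeast ⟨t, ht, hpt⟩
  have hps' : f s * g s ≤ 0 := hps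
  have haa : a ∈ Set.Icc a b := ⟨le_rfl, hs.1.trans hs.2⟩
  -- The value `f(a)⁴ / 16` lies strictly below the lower bound `f(a)⁴ / 8`.
  obtain ⟨x, hx, hpx⟩ := intermediate_value_Icc' hs.1
    (hpc.mono (Set.Icc_subset_Icc_right hs.2))
    (show (f a ^ 2) ^ 2 / 16 ∈ Set.Icc (f s * g s) (f a * g a) from
      ⟨by linarith, by linarith [hlower a haa ha]⟩)
  have hpx' : f x * g x = (f a ^ 2) ^ 2 / 16 := hpx
  have hxs : x < s := by
    refine lt_of_le_of_ne hx.2 ?_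
    rintro rfl
    linarith
  have hpos : ∀ u ∈ Set.Icc a x, 0 < f u * g u := by
    intro u hu
    by_contra! hle
    have := hmin ⟨⟨hu.1, hu.2.trans (hx.2.trans hs.2)⟩, hle⟩
    linarith [hu.2]
  have hxb : x ∈ Set.Icc a b := ⟨hx.1, hx.2.trans hs.2⟩
  have hmono := sq_le_sq_of_mul_deriv_pos hx.1
    (fun u hu => hf u ⟨hu.1, hu.2.trans hxb.2⟩) hpos
  have h4 : (f a ^ 2) ^ 2 ≤ (f x ^ 2) ^ 2 := by gcongr
  linarith [hlower x hxb (by linarith)]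

/-- The sign-persistence claim in the first case of the proof of Theorem 4.3:
if `λ ∈ C²((0,T))`, `λ'(t₀) λ''(t₀) > 0` at some `t₀ ∈ (0,T)`, and the Loewner
curvature bound `|λ'(t)|³ ≤ 8 |λ''(t)|` holds whenever `λ'(t) λ''(t) > 0` on `[t₀,T)`,
then `λ'(t) λ''(t) > 0` and `|λ'(t)| ≥ |λ'(t₀)| > 0` for all `t ∈ [t₀,T)`;
in particular `λ'` and `λ''` never vanish on `[t₀,T)`. -/
theorem sign_persistence
    (T : EReal) (l : ℝ → ℝ) (t₀ : ℝ)
    (ht₀ : 0 < t₀) (ht₀T : (t₀ : EReal) < T)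
    (hC2 : ContDiffOn ℝ 2 l {t : ℝ | 0 < t ∧ (t : EReal) < T})
    (hsign : 0 < deriv l t₀ * deriv (deriv l) t₀)
    (hbound : ∀ t : ℝ, t₀ ≤ t → (t : EReal) < T →
      0 < deriv l t * deriv (deriv l) t →
      |deriv l t| ^ 3 ≤ 8 * |deriv (deriv l) t|) :
    ∀ t : ℝ, t₀ ≤ t → (t : EReal) < T →
      0 < deriv l t * deriv (deriv l) t ∧
      0 < |deriv l t₀| ∧
      |deriv l t₀| ≤ |deriv l t| ∧
      deriv l t ≠ 0 ∧ deriv (deriv l) t ≠ 0 := by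
  intro t ht htT
  have hopen : IsOpen {t : ℝ | 0 < t ∧ (t : EReal) < T} :=
    (isOpen_lt continuous_const continuous_id).inter
      (isOpen_lt continuous_coe_real_ereal continuous_const)
  have hsub : Set.Icc t₀ t ⊆ {t : ℝ | 0 < t ∧ (t : EReal) < T} := fun u hu =>
    ⟨ht₀.trans_le hu.1, (EReal.coe_le_coe_iff.2 hu.2).trans_lt htT⟩
  have hC1 : ContDiffOn ℝ 1 (deriv l) {t : ℝ | 0 < t ∧ (t : EReal) < T} :=
    hC2.deriv_of_isOpen hopen (by norm_num)
  have hf : ∀ u ∈ Set.Icc t₀ t, HasDerivAt (deriv l) (deriv (deriv l) u) u := fun u hu =>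
    ((hC1.differentiableOn (by norm_num)).differentiableAt
      (hopen.mem_nhds (hsub hu))).hasDerivAt
  have hg : ContinuousOn (deriv (deriv l)) (Set.Icc t₀ t) :=
    (hC1.continuousOn_deriv_of_isOpen hopen le_rfl).mono hsub
  have hpos := mul_deriv_pos_of_curvature_bound hf hg hsign
    (fun u hu => hbound u hu.1 (hsub hu).2)
  have hpt := hpos t ⟨ht, le_rfl⟩
  exact ⟨hpt, abs_pos.2 (left_ne_zero_of_mul hsign.ne'),
    sq_le_sq.1 (sq_le_sq_of_mul_deriv_pos ht hf hpos),
    left_ne_zero_of_mul hpt.ne', right_ne_zero_of_mul hpt.ne'⟩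
end

section
/- Let T > 0, let l : [0,T] → ℝ be continuous with l(0) ≠ 0, and let a ∈ ℝ∖{0}. Then there exist τ ∈ (0,T] and a C² function λ : [0,τ] → ℝ with λ(0) = 0, λ′(0) = 3a/2, such that for all t ∈ [0,τ]: λ′(t) ≠ 0, λ″(t) ≠ 0, and λ′(t)³/λ″(t) = l(t). Explicitly, λ′ may be taken to satisfy λ′(t)^(−2) = 4/(9a²) − 2∫₀ᵗ (1/l(s)) ds on [0,τ]. -/
/-!
The equation `λ'³ / λ'' = l` says `(λ'⁻²)' = -2 / l`, so it is solved by one quadrature: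
with `F t = 4 / (9 a²) - 2 ∫₀ᵗ 1 / l`, put `λ' = sign a / √F` and integrate again. The time `τ` is
chosen so small that `l ≠ 0` and `F > 0` on `[0, τ]`, which is possible by continuity since
`l 0 ≠ 0` and `F 0 = 4 / (9 a²) > 0` (`exists_Icc_mapsTo_of_continuousOn`). Then `λ'' = λ'³ / l`, and
both integrations are the one-sided fundamental theorem of calculus
`hasDerivWithinAt_integral_Icc`.
-/

/-- Only continuity on the interval is available, so the derivative at the end points
is one-sided. -/
lemma hasDerivWithinAt_integral_Icc {b : ℝ} (hb : 0 ≤ b) {f : ℝ → ℝ}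
    (hf : ContinuousOn f (Set.Icc 0 b)) {t : ℝ} (ht : t ∈ Set.Icc 0 b) :
    HasDerivWithinAt (fun u => ∫ s in (0 : ℝ)..u, f s) (f t) (Set.Icc 0 b) t := by
  -- Replace `f` by its constant continuous extension to the whole line.
  set g : ℝ → ℝ := Set.IccExtend hb ((Set.Icc 0 b).domRestrict f) with hg
  have hgc : Continuous g := (continuousOn_iff_continuous_domRestrict.1 hf).Icc_extend'
  have hgf : ∀ u ∈ Set.Icc 0 b, g u = f u := fun u hu => by
    rw [hg, Set.IccExtend_of_mem hb _ hu, Set.domRestrict_apply]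
  have hint : ∀ u ∈ Set.Icc 0 b, ∫ s in (0 : ℝ)..u, f s = ∫ s in (0 : ℝ)..u, g s := by
    intro u hu
    refine intervalIntegral.integral_congr fun s hs => (hgf s ?_).symm
    rw [Set.uIcc_of_le hu.1] at hs
    exact ⟨hs.1, hs.2.trans hu.2⟩
  have h := (hgc.integral_hasStrictDerivAt 0 t).hasDerivAt.hasDerivWithinAt (s := Set.Icc 0 b)
  rw [hgf t ht] at h
  exact h.congr hint (hint t ht)

lemma exists_Icc_mapsTo_of_continuousOn {b : ℝ} (hb : 0 < b) {f : ℝ → ℝ}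
    (hf : ContinuousOn f (Set.Icc 0 b)) {U : Set ℝ} (hU : IsOpen U) (h0 : f 0 ∈ U) :
    ∃ c, 0 < c ∧ c ≤ b ∧ ∀ t ∈ Set.Icc 0 c, f t ∈ U := by
  have h := hf 0 ⟨le_rfl, hb.le⟩ (hU.mem_nhds h0)
  obtain ⟨ε, hε, hsub⟩ := Metric.mem_nhdsWithin_iff.1 h
  refine ⟨min (ε / 2) b, by positivity, min_le_right _ _, fun t ht => hsub ⟨?_, ht.1, ?_⟩⟩
  · have := ht.2.trans (min_le_left _ _)
    rw [Metric.mem_ball, Real.dist_eq, sub_zero, abs_of_nonneg ht.1]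
    linarith
  · exact ht.2.trans (min_le_right _ _)

/-- Theorem 4.9 (analytic content): given a continuous prescribed curvature
`l : [0,T] → ℝ` with `l(0) ≠ 0` and a scale `a ≠ 0`, there is a short time `τ ∈ (0,T]`
and a `C²` driving function `λ` on `[0,τ]` with `λ(0) = 0`, `λ'(0) = 3a/2`,
`λ'(t) ≠ 0`, `λ''(t) ≠ 0`, and Loewner curvature `λ'(t)³/λ''(t) = l(t)` on `[0,τ]`;
moreover `λ'` satisfies `λ'(t)⁻² = 4/(9a²) - 2∫₀ᵗ ds/l(s)`. -/
theorem prescribed_curvature_existence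
    (T : ℝ) (hT : 0 < T) (l : ℝ → ℝ)
    (hl : ContinuousOn l (Set.Icc 0 T)) (hl0 : l 0 ≠ 0)
    (a : ℝ) (ha : a ≠ 0) :
    ∃ τ : ℝ, 0 < τ ∧ τ ≤ T ∧ ∃ lam : ℝ → ℝ,
      ContDiffOn ℝ 2 lam (Set.Icc 0 τ) ∧
      lam 0 = 0 ∧
      derivWithin lam (Set.Icc 0 τ) 0 = 3 * a / 2 ∧
      ∀ t ∈ Set.Icc (0 : ℝ) τ,
        derivWithin lam (Set.Icc 0 τ) t ≠ 0 ∧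
        derivWithin (derivWithin lam (Set.Icc 0 τ)) (Set.Icc 0 τ) t ≠ 0 ∧
        (derivWithin lam (Set.Icc 0 τ) t) ^ 3
            / derivWithin (derivWithin lam (Set.Icc 0 τ)) (Set.Icc 0 τ) t = l t ∧
        ((derivWithin lam (Set.Icc 0 τ) t) ^ 2)⁻¹
            = 4 / (9 * a ^ 2) - 2 * ∫ s in (0 : ℝ)..t, 1 / l s := by
  obtain ⟨b, hb, hbT, hlb⟩ :=
    exists_Icc_mapsTo_of_continuousOn hT hl isOpen_compl_singleton (U := {0}ᶜ) hl0
  have hinv : ContinuousOn (fun s => 1 / l s) (Set.Icc 0 b) :=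
    continuousOn_const.div (hl.mono (Set.Icc_subset_Icc_right hbT)) hlb
  set F : ℝ → ℝ := fun t => 4 / (9 * a ^ 2) - 2 * ∫ s in (0 : ℝ)..t, 1 / l s with hF
  have hFd : ∀ t ∈ Set.Icc 0 b, HasDerivWithinAt F (-(2 * (1 / l t))) (Set.Icc 0 b) t :=
    fun t ht => ((hasDerivWithinAt_integral_Icc hb.le hinv ht).const_mul 2).const_sub _
  have hF0 : F 0 = 4 / (9 * a ^ 2) := by simp [hF]
  obtain ⟨τ, hτ, hτb, hFτ⟩ :=
    exists_Icc_mapsTo_of_continuousOn hb (fun t ht => (hFd t ht).continuousWithinAt)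
      (U := Set.Ioi 0) isOpen_Ioi (by rw [hF0, Set.mem_Ioi]; positivity)
  have hsub : Set.Icc 0 τ ⊆ Set.Icc 0 b := Set.Icc_subset_Icc_right hτb
  have hu : UniqueDiffOn ℝ (Set.Icc 0 τ) := uniqueDiffOn_Icc hτ
  -- `a / |a|` is the sign of `a`.
  set σ : ℝ := a / |a| with hσ
  have habs : |a| ≠ 0 := abs_ne_zero.2 ha
  have hσ2 : σ ^ 2 = 1 := by
    rw [hσ, div_pow, sq_abs, div_self (pow_ne_zero 2 ha)]
  have hσ0 : σ ≠ 0 := div_ne_zero ha habs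
  set μ : ℝ → ℝ := fun t => σ / √(F t) with hμ
  have hμ0 : ∀ t ∈ Set.Icc 0 τ, μ t ≠ 0 := fun t ht =>
    div_ne_zero hσ0 (Real.sqrt_pos.2 (hFτ t ht)).ne'
  have hμd : ∀ t ∈ Set.Icc 0 τ, HasDerivWithinAt μ (μ t ^ 3 / l t) (Set.Icc 0 τ) t := by
    intro t ht
    have hpos : 0 < √(F t) := Real.sqrt_pos.2 (hFτ t ht)
    have hlt : l t ≠ 0 := hlb t (hsub ht)
    have h := (((hFd t (hsub ht)).mono hsub).sqrt (hFτ t ht).ne').fun_inv hpos.ne'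
    have h2 := h.const_mul σ
    simp only [← div_eq_mul_inv] at h2
    refine h2.congr_deriv ?_
    have h3 : σ ^ 3 = σ := by rw [pow_succ, hσ2, one_mul]
    simp only [hμ, div_pow, h3]
    field_simp
  have hμc : ContinuousOn μ (Set.Icc 0 τ) := fun t ht => (hμd t ht).continuousWithinAt
  set lam : ℝ → ℝ := fun t => ∫ s in (0 : ℝ)..t, μ s with hlam
  have hlamd : ∀ t ∈ Set.Icc 0 τ, HasDerivWithinAt lam (μ t) (Set.Icc 0 τ) t :=
    fun t ht => hasDerivWithinAt_integral_Icc hτ.le hμc ht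
  have hd1 : ∀ t ∈ Set.Icc 0 τ, derivWithin lam (Set.Icc 0 τ) t = μ t :=
    fun t ht => (hlamd t ht).derivWithin (hu t ht)
  have hμd1 : ∀ t ∈ Set.Icc 0 τ, derivWithin μ (Set.Icc 0 τ) t = μ t ^ 3 / l t :=
    fun t ht => (hμd t ht).derivWithin (hu t ht)
  have hd2 : ∀ t ∈ Set.Icc 0 τ,
      derivWithin (derivWithin lam (Set.Icc 0 τ)) (Set.Icc 0 τ) t = μ t ^ 3 / l t :=
    fun t ht => (derivWithin_congr hd1 (hd1 t ht)).trans (hμd1 t ht)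
  have hμC : ContDiffOn ℝ 1 μ (Set.Icc 0 τ) := by
    rw [show (1 : WithTop ℕ∞) = 0 + 1 by norm_num, contDiffOn_succ_iff_derivWithin hu]
    refine ⟨fun t ht => (hμd t ht).differentiableWithinAt, by simp, contDiffOn_zero.2 ?_⟩
    exact ((hμc.pow 3).div (hl.mono (hsub.trans (Set.Icc_subset_Icc_right hbT)))
      fun t ht => hlb t (hsub ht)).congr hμd1
  have hlamC : ContDiffOn ℝ 2 lam (Set.Icc 0 τ) := by
    rw [show (2 : WithTop ℕ∞) = 1 + 1 by norm_num, contDiffOn_succ_iff_derivWithin hu]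
    exact ⟨fun t ht => (hlamd t ht).differentiableWithinAt, by simp, hμC.congr hd1⟩
  refine ⟨τ, hτ, hτb.trans hbT, lam, hlamC, by simp [hlam], ?_, fun t ht => ?_⟩
  · have hs : √(F 0) = 2 / (3 * |a|) := by
      rw [hF0, Real.sqrt_eq_iff_mul_self_eq (by positivity) (by positivity), ← sq_abs a]
      field_simp
      norm_num
    rw [hd1 0 ⟨le_rfl, hτ.le⟩]
    simp only [hμ, hs, hσ]
    field_simp
  · have hlt : l t ≠ 0 := hlb t (hsub ht)
    have hμt := hμ0 t ht
    rw [hd2 t ht, hd1 t ht]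
    refine ⟨hμt, div_ne_zero (pow_ne_zero 3 hμt) hlt, div_div_cancel₀ (pow_ne_zero 3 hμt), ?_⟩
    rw [hμ, div_pow, hσ2, Real.sq_sqrt (le_of_lt (hFτ t ht)), one_div, inv_inv]
end
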